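/- Assume the Riemann Hypothesis. Then there exist constants C > 0 and T₀ > 0 such that for every real t > T₀ with ζ(1/2 + it) ≠ 0, one has |−Re(ζ'(1/2+it)/ζ(1/2+it)) − (1/2)·log(t/(2π))| ≤ C/t². -/

import Mathlib

open Complex Real

/-!
The completed zeta function `Λ = ζ Γℝ` commutes with conjugation and is invariant under
`s ↦ 1 - s`; on the critical line these two reflections agree, so `Λ'/Λ` is purely imaginary there
and `-Re (ζ'/ζ) = Re (Γℝ'/Γℝ) = Re ψ(s/2) / 2 - (log π) / 2`, with `ψ` the digamma function.

It remains to show `ψ(s) = log s - 1 / (2 s) + O(1 / |s|²)` on the right half-plane. Euler's limit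
formula for `Γ` converges pointwise and boundedly, hence may be differentiated by Cauchy's formula,
giving `ψ(s) = lim (log n - ∑_{j ≤ n} 1 / (s + j))`. By the trapezoidal rule for `∫ dx / (s + x)` on
`[j, j + 1]`, the sum telescopes up to errors `O(1 / |s + j|³)`.
-/

open Filter Topology ComplexConjugate

section LogDeriv

lemma logDeriv_const_sub_of_symm {𝕜 𝕜' : Type*} [NontriviallyNormedField 𝕜]
    [NontriviallyNormedField 𝕜'] [NormedAlgebra 𝕜 𝕜'] {f : 𝕜 → 𝕜'} {a : 𝕜}
    (hf : ∀ x, f (a - x) = f x) (x : 𝕜) : logDeriv f (a - x) = -logDeriv f x := by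
  have hderiv : deriv f x = -deriv f (a - x) := by
    rw [← deriv_comp_const_sub, funext hf]
  rw [logDeriv_apply, logDeriv_apply, hf, hderiv, neg_div, neg_neg]

lemma logDeriv_conj_of_symm {f : ℂ → ℂ} (hf : ∀ z, f (conj z) = conj (f z)) (s : ℂ) :
    logDeriv f (conj s) = conj (logDeriv f s) := by
  have hsymm : conj ∘ f ∘ conj = f := funext fun z ↦ by simp [hf]
  have hderiv : deriv f (conj s) = conj (deriv f s) := by
    conv_lhs => rw [← hsymm]
    simp [deriv_conj_conj]
  rw [logDeriv_apply, logDeriv_apply, hf, hderiv, map_div₀]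

lemma logDeriv_const_cpow {c s : ℂ} {g : ℂ → ℂ} (hc : c ≠ 0) (hg : DifferentiableAt ℂ g s) :
    logDeriv (fun z ↦ c ^ g z) s = Complex.log c * deriv g s := by
  have hne : c ^ g s ≠ 0 := by simp [cpow_eq_zero_iff, hc]
  rw [logDeriv_apply, (hg.hasDerivAt.const_cpow (Or.inl hc)).deriv]
  field_simp

end LogDeriv

section CircleIntegral

variable {ι E : Type*} [NormedAddCommGroup E] [NormedSpace ℂ E] {l : Filter ι}
  [l.IsCountablyGenerated] {F : ι → ℂ → E} {f : ℂ → E} {c : ℂ} {R K : ℝ}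

lemma tendsto_circleIntegral_of_norm_le (hR : 0 ≤ R)
    (hF : ∀ᶠ i in l, ContinuousOn (F i) (Metric.sphere c R))
    (hK : ∀ᶠ i in l, ∀ z ∈ Metric.sphere c R, ‖F i z‖ ≤ K)
    (hlim : ∀ z ∈ Metric.sphere c R, Tendsto (F · z) l (𝓝 (f z))) :
    Tendsto (fun i ↦ ∮ z in C(c, R), F i z) l (𝓝 (∮ z in C(c, R), f z)) := by
  have hmem := circleMap_mem_sphere c hR
  refine intervalIntegral.tendsto_integral_filter_of_dominated_convergence
    (fun _ ↦ R * K) ?_ ?_ (by simp) ?_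
  · filter_upwards [hF] with i hi
    simp only [deriv_circleMap]
    exact (((continuous_circleMap 0 R).mul continuous_const).smul
      (hi.comp_continuous (continuous_circleMap c R) hmem)).aestronglyMeasurable
  · filter_upwards [hK] with i hi
    refine .of_forall fun θ _ ↦ ?_
    rw [norm_smul, deriv_circleMap, norm_mul, norm_circleMap_zero, norm_I, mul_one,
      abs_of_nonneg hR]
    gcongr
    exact hi _ (hmem θ)
  · exact .of_forall fun θ _ ↦ (hlim _ (hmem θ)).const_smul _

lemma tendsto_deriv_of_tendsto_of_norm_le [CompleteSpace E] (hR : 0 < R)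
    (hF : ∀ᶠ i in l, DiffContOnCl ℂ (F i) (Metric.ball c R))
    (hf : DiffContOnCl ℂ f (Metric.ball c R))
    (hK : ∀ᶠ i in l, ∀ z ∈ Metric.sphere c R, ‖F i z‖ ≤ K)
    (hlim : ∀ z ∈ Metric.sphere c R, Tendsto (F · z) l (𝓝 (f z))) :
    Tendsto (fun i ↦ deriv (F i) c) l (𝓝 (deriv f c)) := by
  have hcauchy {g : ℂ → E} (hg : DiffContOnCl ℂ g (Metric.ball c R)) :
      (2 * π * I : ℂ)⁻¹ • ∮ z in C(c, R), (1 / (z - c) ^ 2) • g z = deriv g c := by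
    rw [hg.deriv_eq_smul_circleIntegral hR, inv_smul_smul₀ two_pi_I_ne_zero]
  have hkernel : ContinuousOn (fun z ↦ 1 / (z - c) ^ 2) (Metric.sphere c R) := by
    refine continuousOn_const.div (by fun_prop) fun z hz ↦ pow_ne_zero 2 (sub_ne_zero.2 ?_)
    exact Metric.ne_of_mem_sphere hz hR.ne'
  have hint : Tendsto (fun i ↦ ∮ z in C(c, R), (1 / (z - c) ^ 2) • F i z) l
      (𝓝 (∮ z in C(c, R), (1 / (z - c) ^ 2) • f z)) := by
    refine tendsto_circleIntegral_of_norm_le (K := 1 / R ^ 2 * K) hR.le ?_ ?_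
      fun z hz ↦ (hlim z hz).const_smul _
    · filter_upwards [hF] with i hi
      exact hkernel.smul (hi.continuousOn_ball.mono Metric.sphere_subset_closedBall)
    · filter_upwards [hK] with i hi z hz
      rw [norm_smul, norm_div, norm_one, norm_pow, mem_sphere_iff_norm.1 hz]
      gcongr
      exact hi z hz
  rw [← hcauchy hf]
  refine (hint.const_smul _).congr' ?_
  filter_upwards [hF] with i hi using hcauchy hi

end CircleIntegral

section GammaSeq

lemma ne_neg_natCast_of_re_pos {s : ℂ} (hs : 0 < s.re) (m : ℕ) : s ≠ -m := by
  rintro rfl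
  simp only [neg_re, natCast_re, Left.neg_pos_iff] at hs
  exact hs.not_ge m.cast_nonneg

lemma norm_GammaSeq_le_Gamma_re {s : ℂ} (hs : 0 < s.re) {n : ℕ} (hn : n ≠ 0) :
    ‖Complex.GammaSeq s n‖ ≤ Real.Gamma s.re := by
  have hint := Real.GammaIntegral_convergent hs
  rw [Complex.GammaSeq_eq_approx_Gamma_integral hs hn, Real.Gamma_eq_integral hs,
    intervalIntegral.integral_of_le n.cast_nonneg]
  refine (MeasureTheory.norm_integral_le_of_norm_le
    (hint.mono_set Set.Ioc_subset_Ioi_self) ?_).trans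
    (MeasureTheory.setIntegral_mono_set hint ?_ (.of_forall fun _ hx ↦ hx.1))
  · filter_upwards [MeasureTheory.ae_restrict_mem measurableSet_Ioc] with x ⟨hx0, hxn⟩
    have hbase : 0 ≤ 1 - x / n := sub_nonneg.2 (div_le_one_of_le₀ hxn n.cast_nonneg)
    rw [norm_mul, Complex.norm_of_nonneg (pow_nonneg hbase n), norm_cpow_eq_rpow_re_of_pos hx0,
      sub_re, one_re]
    gcongr
    exact one_sub_div_pow_le_exp_neg hxn
  · filter_upwards [MeasureTheory.ae_restrict_mem measurableSet_Ioi] with x (hx : 0 < x)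
    exact mul_nonneg (exp_pos _).le (rpow_nonneg hx.le _)

variable {s : ℂ} {n : ℕ}

lemma differentiableAt_GammaSeq (hs : ∀ m : ℕ, s ≠ -m) (hn : n ≠ 0) :
    DifferentiableAt ℂ (Complex.GammaSeq · n) s := by
  unfold Complex.GammaSeq
  refine .div (.mul_const (differentiableAt_id.const_cpow (Or.inl (Nat.cast_ne_zero.2 hn))) _)
    (by fun_prop) (Finset.prod_ne_zero_iff.2 fun j _ ↦ ?_)
  exact mt eq_neg_of_add_eq_zero_left (hs j)

lemma logDeriv_GammaSeq (hs : ∀ m : ℕ, s ≠ -m) (hn : n ≠ 0) :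
    logDeriv (Complex.GammaSeq · n) s =
      Complex.log n - ∑ j ∈ Finset.range (n + 1), 1 / (s + j) := by
  have hn' : (n : ℂ) ≠ 0 := Nat.cast_ne_zero.2 hn
  have hfact : (n.factorial : ℂ) ≠ 0 := Nat.cast_ne_zero.2 n.factorial_ne_zero
  have hfactor (j : ℕ) : s + j ≠ 0 := mt eq_neg_of_add_eq_zero_left (hs j)
  have hpow : (n : ℂ) ^ s ≠ 0 := by simp [cpow_eq_zero_iff, hn']
  have hdiff : DifferentiableAt ℂ (fun z : ℂ ↦ (n : ℂ) ^ z) s :=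
    differentiableAt_id.const_cpow (Or.inl hn')
  unfold Complex.GammaSeq
  rw [logDeriv_div (f := fun z ↦ (n : ℂ) ^ z * n.factorial) s (mul_ne_zero hpow hfact)
      (Finset.prod_ne_zero_iff.2 fun j _ ↦ hfactor j) (hdiff.mul_const _) (by fun_prop),
    logDeriv_mul_const _ _ hfact, logDeriv_prod (fun j _ ↦ hfactor j) (fun j _ ↦ by fun_prop),
    logDeriv_const_cpow (g := fun z ↦ z) hn' differentiableAt_id]
  simp [logDeriv_apply]

lemma tendsto_deriv_GammaSeq (hs : 0 < s.re) :
    Tendsto (fun n : ℕ ↦ deriv (Complex.GammaSeq · n) s) atTop (𝓝 (deriv Complex.Gamma s)) := by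
  set R := s.re / 2
  have hR : 0 < R := half_pos hs
  have hre : ∀ z ∈ Metric.closedBall s R, z.re ∈ Set.Icc R (3 * R) := fun z hz ↦ by
    have hdist := (abs_re_le_norm (z - s)).trans (mem_closedBall_iff_norm.1 hz)
    rw [sub_re, abs_le] at hdist
    constructor <;> linarith [show s.re = 2 * R by ring]
  have hne : ∀ z ∈ Metric.closedBall s R, ∀ m : ℕ, z ≠ -m := fun z hz ↦
    ne_neg_natCast_of_re_pos (hR.trans_le (hre z hz).1)
  obtain ⟨K, hK⟩ : BddAbove (Real.Gamma '' Set.Icc R (3 * R)) :=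
    isCompact_Icc.bddAbove_image
      (Real.differentiableOn_Gamma_Ioi.continuousOn.mono fun x hx ↦ hR.trans_le hx.1)
  refine tendsto_deriv_of_tendsto_of_norm_le (K := K) hR ?_ ?_ ?_
    fun z _ ↦ Complex.GammaSeq_tendsto_Gamma z
  · filter_upwards [eventually_ne_atTop 0] with n hn
    exact DifferentiableOn.diffContOnCl_ball (U := Metric.closedBall s R) (fun z hz ↦
      (differentiableAt_GammaSeq (hne z hz) hn).differentiableWithinAt) subset_rfl
  · exact DifferentiableOn.diffContOnCl_ball (U := Metric.closedBall s R) (fun z hz ↦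
      (Complex.differentiableAt_Gamma z (hne z hz)).differentiableWithinAt) subset_rfl
  · filter_upwards [eventually_ne_atTop 0] with n hn z hz
    have hz' := hre z (Metric.sphere_subset_closedBall hz)
    exact (norm_GammaSeq_le_Gamma_re (hR.trans_le hz'.1) hn).trans (hK ⟨_, hz', rfl⟩)

lemma tendsto_log_sub_sum_digamma (hs : 0 < s.re) :
    Tendsto (fun n : ℕ ↦ Complex.log n - ∑ j ∈ Finset.range (n + 1), 1 / (s + j)) atTop
      (𝓝 (Complex.digamma s)) := by
  refine ((tendsto_deriv_GammaSeq hs).div (Complex.GammaSeq_tendsto_Gamma s)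
    (Complex.Gamma_ne_zero_of_re_pos hs)).congr' ?_
  filter_upwards [eventually_ne_atTop 0] with n hn
  exact logDeriv_GammaSeq (ne_neg_natCast_of_re_pos hs) hn

end GammaSeq

section Stirling

/-- The first two terms `log s - 1 / (2 s)` of the Stirling expansion of the digamma function, with
the principal branch of the logarithm. -/
noncomputable def digammaStirling (s : ℂ) : ℂ :=
  Complex.log s - 1 / (2 * s)

lemma re_digammaStirling (s : ℂ) :
    (digammaStirling s).re = Real.log ‖s‖ - s.re / (2 * ‖s‖ ^ 2) := by
  have hinv : 1 / (2 * s) = (s⁻¹ / 2 : ℂ) := by rw [one_div, mul_inv, inv_mul_eq_div]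
  rw [digammaStirling, sub_re, log_re, hinv, div_ofNat_re, inv_re, normSq_eq_norm_sq, div_div,
    mul_comm 2]

lemma tendsto_log_sub_digammaStirling (s : ℂ) :
    Tendsto (fun n : ℕ ↦ Complex.log n - digammaStirling (s + n)) atTop (𝓝 0) := by
  have hratio : Tendsto (fun n : ℕ ↦ 1 + s / n) atTop (𝓝 1) := by
    simpa using (tendsto_const_div_atTop_nhds_zero_nat s).const_add 1
  have hlog := hratio.clog one_mem_slitPlane
  have hinv := (tendsto_const_div_atTop_nhds_zero_nat (1 : ℂ)).mul
    ((hratio.const_mul 2).inv₀ (by norm_num))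
  have hsum := hinv.sub hlog
  simp only [Complex.log_one, zero_mul, sub_zero] at hsum
  refine hsum.congr' ?_
  filter_upwards [eventually_ne_atTop 0, hratio.eventually_ne one_ne_zero] with n hn hne
  have hn' : (n : ℂ) ≠ 0 := Nat.cast_ne_zero.2 hn
  have hfactor : s + n = n * (1 + s / n) := by field_simp; ring
  have hlogmul : Complex.log (n * (1 + s / n)) = Complex.log n + Complex.log (1 + s / n) := by
    rw [← ofReal_natCast, Complex.log_ofReal_mul (Nat.cast_pos.2 (Nat.pos_of_ne_zero hn))
      (by simpa using hne), ofReal_log n.cast_nonneg]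
  rw [digammaStirling, hfactor, hlogmul]
  field_simp
  ring

lemma log_add_one_sub_log {w : ℂ} (hw : 0 < w.re) :
    Complex.log (w + 1) - Complex.log w = Complex.log (1 + 1 / w) := by
  have hw0 : w ≠ 0 := by rintro rfl; simp at hw
  have hpos : 0 < (1 + 1 / w).re := by
    rw [add_re, one_re, one_div, inv_re]
    have := normSq_pos.2 hw0
    positivity
  have hne : 1 + 1 / w ≠ 0 := fun h ↦ by rw [h, zero_re] at hpos; exact hpos.false
  have harg := abs_lt.1 (abs_arg_lt_pi_div_two_iff.2 (Or.inl hw))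
  have harg' := abs_lt.1 (abs_arg_lt_pi_div_two_iff.2 (Or.inl hpos))
  have hmul : w + 1 = w * (1 + 1 / w) := by field_simp
  rw [hmul, (log_mul_eq_add_log_iff hw0 hne).2 ⟨by linarith, by linarith⟩, add_sub_cancel_left]

-- The left side is the error of the trapezoidal rule for `∫ u in 0..1, x / (1 + u x)`.
lemma norm_trapezoid_sub_log_one_add_le {x : ℂ} (hx : ‖x‖ ≤ 1 / 2) :
    ‖(x + x / (1 + x)) / 2 - Complex.log (1 + x)‖ ≤ 2 * ‖x‖ ^ 3 := by
  have hden : 1 / 2 ≤ ‖1 + x‖ := by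
    have := norm_sub_norm_le (1 : ℂ) (-x)
    rw [norm_one, norm_neg, sub_neg_eq_add] at this
    linarith
  have hne : 1 + x ≠ 0 := norm_pos_iff.1 (by linarith)
  have htaylor : ‖Complex.log (1 + x) - (x - x ^ 2 / 2)‖ ≤ ‖x‖ ^ 3 := by
    have hrem := norm_log_sub_logTaylor_le 2 (z := x) (by linarith)
    have hpoly : logTaylor (2 + 1) x = x - x ^ 2 / 2 := by
      simp [logTaylor_succ, logTaylor_zero]
      ring
    rw [hpoly] at hrem
    have hinv : (1 - ‖x‖)⁻¹ ≤ 2 := by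
      rw [inv_le_comm₀ (by linarith) two_pos]; linarith
    calc _ ≤ ‖x‖ ^ 3 * (1 - ‖x‖)⁻¹ / ((2 : ℕ) + 1) := hrem
      _ ≤ ‖x‖ ^ 3 * 2 / ((2 : ℕ) + 1) := by gcongr
      _ ≤ ‖x‖ ^ 3 := by push_cast; linarith [pow_nonneg (norm_nonneg x) 3]
  have hrational : ‖(x + x / (1 + x)) / 2 - (x - x ^ 2 / 2)‖ ≤ ‖x‖ ^ 3 := by
    have heq : (x + x / (1 + x)) / 2 - (x - x ^ 2 / 2) = x ^ 3 / (2 * (1 + x)) := by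
      field_simp; ring
    rw [heq, norm_div, norm_pow, norm_mul, Complex.norm_two]
    exact div_le_self (by positivity) (by linarith)
  calc _ ≤ _ := norm_sub_le_norm_sub_add_norm_sub _ (x - x ^ 2 / 2) _
    _ ≤ 2 * ‖x‖ ^ 3 := by rw [norm_sub_rev (x - x ^ 2 / 2)]; linarith

lemma norm_inv_sub_digammaStirling_sub_le {w : ℂ} (hre : 0 < w.re) (hw : 2 ≤ ‖w‖) :
    ‖1 / w - (digammaStirling (w + 1) - digammaStirling w)‖ ≤ 2 / ‖w‖ ^ 3 := by
  have hw0 : w ≠ 0 := by rintro rfl; simp at hre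
  have hw1 : w + 1 ≠ 0 := by
    simpa [eq_neg_iff_add_eq_zero] using ne_neg_natCast_of_re_pos hre 1
  have hnorm : ‖1 / w‖ = 1 / ‖w‖ := by rw [norm_div, norm_one]
  have htrap := norm_trapezoid_sub_log_one_add_le (x := 1 / w) (by rw [hnorm]; gcongr)
  rw [hnorm, ← log_add_one_sub_log hre] at htrap
  have hdiv : 1 / w / (1 + 1 / w) = 1 / (w + 1) := by field_simp
  have heq : 1 / w - (digammaStirling (w + 1) - digammaStirling w) =
      (1 / w + 1 / w / (1 + 1 / w)) / 2 - (Complex.log (w + 1) - Complex.log w) := by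
    rw [hdiv, digammaStirling, digammaStirling]
    field_simp
    ring
  calc _ ≤ 2 * (1 / ‖w‖) ^ 3 := heq ▸ htrap
    _ = 2 / ‖w‖ ^ 3 := by rw [one_div_pow, mul_one_div]

variable {s : ℂ}

lemma norm_le_norm_add_natCast (hre : 0 ≤ s.re) (j : ℕ) : ‖s‖ ≤ ‖s + j‖ := by
  refine (sq_le_sq₀ (norm_nonneg _) (norm_nonneg _)).1 ?_
  simp only [Complex.sq_norm, normSq_apply, add_re, add_im, natCast_re, natCast_im, add_zero]
  nlinarith [mul_nonneg hre j.cast_nonneg, sq_nonneg (j : ℝ)]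

lemma norm_add_natCast_le_two_mul (hre : 0 ≤ s.re) (j : ℕ) : ‖s‖ + j ≤ 2 * ‖s + j‖ := by
  have hj : (j : ℝ) ≤ ‖s + j‖ :=
    calc (j : ℝ) ≤ (s + j).re := by simpa using hre
      _ ≤ ‖s + j‖ := re_le_norm _
  linarith [norm_le_norm_add_natCast hre j]

lemma inv_cube_le_inv_sq_sub_inv_sq {v : ℝ} (hv : 2 ≤ v) :
    1 / v ^ 3 ≤ 1 / v ^ 2 - 1 / (v + 1) ^ 2 := by
  have hdiff : 1 / v ^ 2 - 1 / (v + 1) ^ 2 - 1 / v ^ 3 =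
      (v ^ 2 - v - 1) / (v ^ 3 * (v + 1) ^ 2) := by
    field_simp
    ring
  have : 0 ≤ (v ^ 2 - v - 1) / (v ^ 3 * (v + 1) ^ 2) :=
    div_nonneg (by nlinarith) (by positivity)
  linarith

lemma norm_sum_inv_sub_digammaStirling_sub_le (hre : 0 < s.re) (hs : 2 ≤ ‖s‖) (m : ℕ) :
    ‖∑ j ∈ Finset.range m, 1 / (s + j) - (digammaStirling (s + m) - digammaStirling s)‖ ≤
      16 / ‖s‖ ^ 2 := by
  have hterm (j : ℕ) :
      ‖1 / (s + j) - (digammaStirling (s + (j + 1 : ℕ)) - digammaStirling (s + j))‖ ≤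
        16 * (1 / (‖s‖ + j) ^ 2 - 1 / (‖s‖ + (j + 1 : ℕ)) ^ 2) := by
    have hj : 2 ≤ ‖s‖ + j := by linarith [j.cast_nonneg (α := ℝ)]
    have hre' : 0 < (s + j).re := by simpa using add_pos_of_pos_of_nonneg hre j.cast_nonneg
    have hhalf : (‖s‖ + j) / 2 ≤ ‖s + j‖ := by
      linarith [norm_add_natCast_le_two_mul hre.le j]
    push_cast
    rw [← add_assoc, ← add_assoc]
    calc _ ≤ 2 / ‖s + j‖ ^ 3 := norm_inv_sub_digammaStirling_sub_le hre'
          (hs.trans (norm_le_norm_add_natCast hre.le j))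
      _ ≤ 2 / ((‖s‖ + j) / 2) ^ 3 := by gcongr
      _ = 16 * (1 / (‖s‖ + j) ^ 3) := by field_simp; norm_num
      _ ≤ _ := by gcongr; exact inv_cube_le_inv_sq_sub_inv_sq hj
  have htelescope : ∑ j ∈ Finset.range m, 1 / (s + j) - (digammaStirling (s + m) -
      digammaStirling s) = ∑ j ∈ Finset.range m,
        (1 / (s + j) - (digammaStirling (s + (j + 1 : ℕ)) - digammaStirling (s + j))) := by
    rw [Finset.sum_sub_distrib, Finset.sum_range_sub (fun j : ℕ ↦ digammaStirling (s + j)),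
      Nat.cast_zero, add_zero]
  calc _ ≤ ∑ j ∈ Finset.range m, 16 * (1 / (‖s‖ + j) ^ 2 - 1 / (‖s‖ + (j + 1 : ℕ)) ^ 2) :=
        htelescope ▸ norm_sum_le_of_le _ fun j _ ↦ hterm j
    _ = 16 * (1 / ‖s‖ ^ 2 - 1 / (‖s‖ + m) ^ 2) := by
        rw [← Finset.mul_sum, Finset.sum_range_sub' (fun j : ℕ ↦ 1 / (‖s‖ + j) ^ 2),
          Nat.cast_zero, add_zero]
    _ ≤ 16 * (1 / ‖s‖ ^ 2) := by gcongr; exact sub_le_self _ (by positivity)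
    _ = 16 / ‖s‖ ^ 2 := mul_one_div _ _

theorem norm_digamma_sub_digammaStirling_le (hre : 0 < s.re) (hs : 2 ≤ ‖s‖) :
    ‖Complex.digamma s - digammaStirling s‖ ≤ 16 / ‖s‖ ^ 2 := by
  have hlim : Tendsto (fun n : ℕ ↦ ∑ j ∈ Finset.range (n + 1), 1 / (s + j) -
      (digammaStirling (s + (n + 1 : ℕ)) - digammaStirling s)) atTop
      (𝓝 (digammaStirling s - Complex.digamma s)) := by
    have h := ((tendsto_log_sub_digammaStirling (s + 1)).sub
      (tendsto_log_sub_sum_digamma hre)).const_add (digammaStirling s)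
    rw [zero_sub, ← sub_eq_add_neg] at h
    refine h.congr fun n ↦ ?_
    push_cast
    rw [add_assoc s, add_comm (1 : ℂ)]
    ring
  rw [norm_sub_rev]
  exact le_of_tendsto' hlim.norm fun n ↦
    norm_sum_inv_sub_digammaStirling_sub_le hre hs (n + 1)

lemma abs_log_norm_sub_log_im_le (him : 0 < s.im) :
    |Real.log ‖s‖ - Real.log s.im| ≤ s.re ^ 2 / (2 * s.im ^ 2) := by
  have hle : s.im ≤ ‖s‖ := im_le_norm s
  have hnorm : 0 < ‖s‖ := him.trans_le hle
  rw [abs_of_nonneg (sub_nonneg.2 (Real.log_le_log him hle))]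
  have hsq : 2 * (Real.log ‖s‖ - Real.log s.im) = Real.log (‖s‖ ^ 2 / s.im ^ 2) := by
    rw [Real.log_div (by positivity) (by positivity), Real.log_pow, Real.log_pow]
    push_cast
    ring
  have hratio : ‖s‖ ^ 2 / s.im ^ 2 - 1 = s.re ^ 2 / s.im ^ 2 := by
    rw [Complex.sq_norm, normSq_apply]
    field_simp
    ring
  have hlog := Real.log_le_sub_one_of_pos (x := ‖s‖ ^ 2 / s.im ^ 2) (by positivity)
  rw [← hsq, hratio] at hlog
  calc _ ≤ s.re ^ 2 / s.im ^ 2 / 2 := by linarith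
    _ = s.re ^ 2 / (2 * s.im ^ 2) := by rw [div_div, mul_comm 2]

theorem abs_re_digamma_sub_log_im_le (hre : 0 < s.re) (him : 0 < s.im) (hs : 2 ≤ ‖s‖) :
    |(Complex.digamma s).re - Real.log s.im| ≤
      (16 + s.re / 2 + s.re ^ 2 / 2) / s.im ^ 2 := by
  have hle : s.im ≤ ‖s‖ := im_le_norm s
  have hstirling : |(Complex.digamma s).re - (digammaStirling s).re| ≤ 16 / s.im ^ 2 := by
    rw [← sub_re]
    exact ((abs_re_le_norm _).trans (norm_digamma_sub_digammaStirling_le hre hs)).trans (by gcongr)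
  have hinv : |s.re / (2 * ‖s‖ ^ 2)| ≤ s.re / (2 * s.im ^ 2) := by
    rw [abs_of_nonneg (by positivity)]
    gcongr
  calc |(Complex.digamma s).re - Real.log s.im|
      = |((Complex.digamma s).re - (digammaStirling s).re) - s.re / (2 * ‖s‖ ^ 2) +
          (Real.log ‖s‖ - Real.log s.im)| := by rw [re_digammaStirling]; ring_nf
    _ ≤ 16 / s.im ^ 2 + s.re / (2 * s.im ^ 2) + s.re ^ 2 / (2 * s.im ^ 2) :=
        (abs_add_le _ _).trans (add_le_add ((abs_sub _ _).trans (add_le_add hstirling hinv))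
          (abs_log_norm_sub_log_im_le him))
    _ = (16 + s.re / 2 + s.re ^ 2 / 2) / s.im ^ 2 := by field_simp

end Stirling

section CompletedZeta

variable {s : ℂ}

lemma Gammaℝ_conj (s : ℂ) : Gammaℝ (conj s) = conj (Gammaℝ s) := by
  have harg : (π : ℂ).arg ≠ π := by
    rw [arg_ofReal_of_nonneg pi_pos.le]
    exact pi_ne_zero.symm
  have hpow : (π : ℂ) ^ conj (-s / 2) = conj ((π : ℂ) ^ (-s / 2)) := by
    rw [cpow_conj _ _ harg, conj_ofReal]
  rw [Gammaℝ_def, Gammaℝ_def, map_mul, ← hpow, ← Complex.Gamma_conj]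
  simp only [map_div₀, map_neg, conj_ofNat]

lemma completedRiemannZeta_eq_mul_Gammaℝ (hs : 0 < s.re) :
    completedRiemannZeta s = riemannZeta s * Gammaℝ s := by
  have hs0 : s ≠ 0 := by rintro rfl; simp at hs
  rw [riemannZeta_def_of_ne_zero hs0, div_mul_cancel₀ _ (Gammaℝ_ne_zero_of_re_pos hs)]

lemma completedRiemannZeta_conj (s : ℂ) :
    completedRiemannZeta (conj s) = conj (completedRiemannZeta s) := by
  have hright {z : ℂ} (hz : 0 < z.re) :
      completedRiemannZeta (conj z) = conj (completedRiemannZeta z) := by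
    rw [completedRiemannZeta_eq_mul_Gammaℝ hz, completedRiemannZeta_eq_mul_Gammaℝ (by simpa),
      riemannZeta_conj, Gammaℝ_conj, map_mul]
  rcases lt_or_ge 0 s.re with hs | hs
  · exact hright hs
  · rw [← completedRiemannZeta_one_sub, ← completedRiemannZeta_one_sub s,
      ← hright (by rw [sub_re, one_re]; linarith), map_sub, map_one]

lemma re_logDeriv_completedRiemannZeta_eq_zero (hs : s.re = 1 / 2) :
    (logDeriv completedRiemannZeta s).re = 0 := by
  have hrefl : conj s = 1 - s := by
    apply Complex.ext
    · rw [conj_re, sub_re, one_re, hs]; norm_num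
    · simp
  have hodd : conj (logDeriv completedRiemannZeta s) = -logDeriv completedRiemannZeta s := by
    rw [← logDeriv_conj_of_symm completedRiemannZeta_conj, hrefl,
      logDeriv_const_sub_of_symm completedRiemannZeta_one_sub]
  have hre := congrArg re hodd
  rw [conj_re, neg_re] at hre
  linarith

lemma differentiableAt_Gammaℝ (hs : ∀ m : ℕ, s / 2 ≠ -m) : DifferentiableAt ℂ Gammaℝ s := by
  have hpi : (π : ℂ) ≠ 0 := ofReal_ne_zero.2 pi_ne_zero
  have hpow : DifferentiableAt ℂ (fun z : ℂ ↦ (π : ℂ) ^ (-z / 2)) s :=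
    .const_cpow (by fun_prop) (Or.inl hpi)
  exact hpow.mul ((Complex.differentiableAt_Gamma _ hs).comp s (by fun_prop))

lemma logDeriv_Gammaℝ (hs : ∀ m : ℕ, s / 2 ≠ -m) :
    logDeriv Gammaℝ s = -Complex.log π / 2 + Complex.digamma (s / 2) / 2 := by
  have hpi : (π : ℂ) ≠ 0 := ofReal_ne_zero.2 pi_ne_zero
  have hlin : DifferentiableAt ℂ (fun z : ℂ ↦ -z / 2) s := by fun_prop
  have hhalf : DifferentiableAt ℂ (fun z : ℂ ↦ z / 2) s := by fun_prop
  have hGamma := Complex.differentiableAt_Gamma _ hs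
  have hpow : (π : ℂ) ^ (-s / 2) ≠ 0 := by simp [cpow_eq_zero_iff, hpi]
  calc logDeriv Gammaℝ s
      = logDeriv (fun z ↦ (π : ℂ) ^ (-z / 2)) s +
          logDeriv (Complex.Gamma ∘ fun z ↦ z / 2) s :=
        logDeriv_mul (g := Complex.Gamma ∘ fun z ↦ z / 2) s hpow (Complex.Gamma_ne_zero hs)
          (hlin.const_cpow (Or.inl hpi)) (hGamma.comp s hhalf)
    _ = -Complex.log π / 2 + Complex.digamma (s / 2) / 2 := by
        rw [logDeriv_const_cpow hpi hlin, logDeriv_comp (g := fun z ↦ z / 2) hGamma hhalf,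
          Complex.digamma_def]
        simp only [deriv_div_const, deriv_neg', deriv_id'']
        ring

lemma logDeriv_completedRiemannZeta (hs : 0 < s.re) (hs1 : s ≠ 1) (hz : riemannZeta s ≠ 0) :
    logDeriv completedRiemannZeta s = logDeriv riemannZeta s + logDeriv Gammaℝ s := by
  have hpole : ∀ m : ℕ, s / 2 ≠ -m := ne_neg_natCast_of_re_pos (by simpa using hs)
  have heq : completedRiemannZeta =ᶠ[𝓝 s] fun z ↦ riemannZeta z * Gammaℝ z := by
    filter_upwards [(isOpen_lt continuous_const continuous_re).mem_nhds hs] with z hz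
    exact completedRiemannZeta_eq_mul_Gammaℝ hz
  rw [(logDeriv_congr_nhds heq).eq_of_nhds, logDeriv_mul s hz (Gammaℝ_ne_zero_of_re_pos hs)
    (differentiableAt_riemannZeta hs1) (differentiableAt_Gammaℝ hpole)]

theorem neg_re_logDeriv_riemannZeta (hs : s.re = 1 / 2) (hz : riemannZeta s ≠ 0) :
    -(logDeriv riemannZeta s).re = (Complex.digamma (s / 2)).re / 2 - Real.log π / 2 := by
  have hpos : 0 < s.re := by rw [hs]; norm_num
  have hs1 : s ≠ 1 := by rintro rfl; norm_num at hs
  have hpole : ∀ m : ℕ, s / 2 ≠ -m := ne_neg_natCast_of_re_pos (by simpa using hpos)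
  have hsum := congrArg re (logDeriv_completedRiemannZeta hpos hs1 hz)
  rw [re_logDeriv_completedRiemannZeta_eq_zero hs, logDeriv_Gammaℝ hpole, add_re, add_re,
    div_ofNat_re, div_ofNat_re, neg_re, ← ofReal_log pi_pos.le, ofReal_re] at hsum
  linarith

end CompletedZeta

theorem rh_implies_critical_line_asymptotics_general {t : ℝ} (ht : 4 ≤ t)
    (hz : riemannZeta (1 / 2 + t * Complex.I) ≠ 0) :
    |(-(deriv riemannZeta (1 / 2 + t * Complex.I) /
          riemannZeta (1 / 2 + t * Complex.I)).re) -
        (1 / 2) * Real.log (t / (2 * Real.pi))| ≤ 33 / t ^ 2 := by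
  set s : ℂ := 1 / 2 + t * Complex.I with hs
  have hre : (s / 2).re = 1 / 4 := by simp [hs]; norm_num
  have him : (s / 2).im = t / 2 := by simp [hs]
  have hnorm : 2 ≤ ‖s / 2‖ := by linarith [im_le_norm (s / 2)]
  have hdigamma : |(Complex.digamma (s / 2)).re - Real.log (t / 2)| ≤ 66 / t ^ 2 :=
    calc _ ≤ (16 + 1 / 4 / 2 + (1 / 4) ^ 2 / 2) / (t / 2) ^ 2 := by
          simpa only [hre, him] using abs_re_digamma_sub_log_im_le (s := s / 2)
            (by rw [hre]; norm_num) (by rw [him]; linarith) hnorm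
      _ ≤ (33 / 2) / (t / 2) ^ 2 := by gcongr; norm_num
      _ = 66 / t ^ 2 := by field_simp; norm_num
  have hlog : Real.log (t / (2 * π)) = Real.log (t / 2) - Real.log π := by
    rw [← div_div, Real.log_div (by linarith) pi_ne_zero]
  have hmain : -(deriv riemannZeta s / riemannZeta s).re - 1 / 2 * Real.log (t / (2 * π)) =
      ((Complex.digamma (s / 2)).re - Real.log (t / 2)) / 2 := by
    rw [← logDeriv_apply, neg_re_logDeriv_riemannZeta (by simp [hs]) hz, hlog]
    ring
  calc _ = |(Complex.digamma (s / 2)).re - Real.log (t / 2)| / 2 := by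
        rw [hmain, abs_div, abs_two]
    _ ≤ 66 / t ^ 2 / 2 := by gcongr
    _ = 33 / t ^ 2 := by ring

/-- Assuming the Riemann Hypothesis, there exist `C > 0` and `T₀ > 0` such that
for every real `t > T₀` with `ζ(1/2 + it) ≠ 0`,
`|-Re(ζ'(1/2+it)/ζ(1/2+it)) - (1/2)·log(t/(2π))| ≤ C/t²`. -/
theorem rh_implies_critical_line_asymptotics
    (hRH : ∀ ρ : ℂ, riemannZeta ρ = 0 → 0 < ρ.re → ρ.re < 1 → ρ.re = 1 / 2) :
    ∃ C > (0 : ℝ), ∃ T₀ > (0 : ℝ), ∀ t : ℝ, T₀ < t →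
      riemannZeta (1 / 2 + t * Complex.I) ≠ 0 →
      |(-(deriv riemannZeta (1 / 2 + t * Complex.I) /
            riemannZeta (1 / 2 + t * Complex.I)).re) -
          (1 / 2) * Real.log (t / (2 * Real.pi))| ≤ C / t ^ 2 :=
  ⟨33, by norm_num, 4, by norm_num, fun _ ht hz ↦
    rh_implies_critical_line_asymptotics_general ht.le hz⟩
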